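/- Let m ≥ 5 be an integer with gcd(m,3) = 1, and for a positive integer x let U_m(x) denote the set of positive integers not exceeding x which are divisible by m and not divisible by 3. Then there exists x_0 such that for all integers x ≥ x_0, ∑_{n ∈ U_m(x)} (−1)^{s(n)} < 0. -/

import Mathlib

open Finset Filter Topology

noncomputable section

/-- `s n` is the number of 1's in the binary expansion of `n`. -/
def s (n : ℕ) : ℕ := (Nat.digits 2 n).count 1

/-- `S m x = ∑_{0 ≤ n < x, m ∣ n} (-1)^(s n)`. -/
def S (m x : ℕ) : ℝ := ∑ n ∈ Finset.range x, if m ∣ n then (-1 : ℝ) ^ (s n) else 0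

/-- `F α N = ∑_{n=0}^{N-1} e^{2πi(αn + s(n)/2)}`. -/
def F (α : ℝ) (N : ℕ) : ℂ :=
  ∑ n ∈ Finset.range N, Complex.exp (2 * Real.pi * Complex.I * ((α : ℂ) * n + (s n : ℂ) / 2))

/-- `bsq m = b_m ^ 2`, defined by cases on `m mod 3`. -/
def bsq (m : ℕ) : ℝ :=
  if m % 3 = 0 then
    Real.sin (Real.pi / 3 * (1 + 3 / m)) * (Real.sqrt 3 - Real.sin (Real.pi / 3 * (1 + 3 / m)))
  else if m % 3 = 1 then
    Real.sin (Real.pi / 3 * (1 - 1 / m)) * (Real.sqrt 3 - Real.sin (Real.pi / 3 * (1 - 1 / m)))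
  else
    Real.sin (Real.pi / 3 * (1 + 1 / m)) * (Real.sqrt 3 - Real.sin (Real.pi / 3 * (1 + 1 / m)))

/-- `b m` is the positive real number with `(b m)^2 = bsq m`. -/
def b (m : ℕ) : ℝ := Real.sqrt (bsq m)

/-- `lam m = λ_m = 1 + log₂ b_m`. -/
def lam (m : ℕ) : ℝ := 1 + Real.logb 2 (b m)

/-- `mu m = μ_m = (2 b_m + 1)/(2 b_m - 1)`. -/
def mu (m : ℕ) : ℝ := (2 * b m + 1) / (2 * b m - 1)

/-- `U m x`: positive integers `≤ x` divisible by `m` and not by 3. -/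
def U (m x : ℕ) : Finset ℕ := (Finset.Icc 1 x).filter (fun n => m ∣ n ∧ ¬ (3 ∣ n))

/-- `V p n`: positive integers `≤ n` whose least prime divisor is `p`. -/
def V (p n : ℕ) : Finset ℕ := (Finset.Icc 1 n).filter (fun j => Nat.minFac j = p)

/-! Write `T z N = ∑_{n < N} (-1)^(s n) z^n`. Orthogonality of roots of unity gives
`M * S M N = ∑_{z^M = 1} T z N`, and `T z (2 * N) = (1 - z) * T (z ^ 2) N`, so the growth of `T z`
is governed by the product of `‖1 - z‖` along the orbit of `z` under squaring. On the unit circle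
`‖1 - z‖ ^ 2 * ‖1 - z ^ 2‖ ≤ √3 ^ 3`, with equality only at the primitive cube roots of unity; hence
`T z` grows strictly more slowly than `√3` per binary digit for every other `z` of odd order. At
the cube roots of unity the rate `√3` is attained: this is Newman's phenomenon, the growth of `S 3`.
Therefore, for odd `m` prime to 3, `S m` is negligible against `S 3` while `3 * m * S (3 * m)` is
asymptotic to `3 * S 3`, so `S m - S (3 * m)` is eventually negative. A factor 2 of `m` can be
removed because `s (2 * n) = s n`. -/

open Asymptotics Polynomial

theorem s_two_mul (n : ℕ) : s (2 * n) = s n := by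
  rcases Nat.eq_zero_or_pos n with rfl | hn
  · rfl
  · rw [s, Nat.digits_def' (by norm_num) (by omega)]
    simp [s]

theorem s_two_mul_add_one (n : ℕ) : s (2 * n + 1) = s n + 1 := by
  rw [s, Nat.digits_def' (by norm_num) (by omega), show (2 * n + 1) / 2 = n by omega]
  simp [s]

/-- The exponential sum `∑_{n < N} (-1)^(s n) z^n`; for `z = exp (2πiα)` it is `F α N`, but only
the multiplicative variable `z` matters here, and it may live in any commutative ring. -/
def thueMorseSum {R : Type*} [CommRing R] (z : R) (N : ℕ) : R :=
  ∑ n ∈ range N, (-1) ^ s n * z ^ n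

theorem thueMorseSum_succ {R : Type*} [CommRing R] (z : R) (N : ℕ) :
    thueMorseSum z (N + 1) = thueMorseSum z N + (-1) ^ s N * z ^ N :=
  sum_range_succ _ _

theorem thueMorseSum_two_mul {R : Type*} [CommRing R] (z : R) (N : ℕ) :
    thueMorseSum z (2 * N) = (1 - z) * thueMorseSum (z ^ 2) N := by
  induction N with
  | zero => simp [thueMorseSum]
  | succ N ih =>
    rw [mul_add_one, thueMorseSum_succ, thueMorseSum_succ, ih, thueMorseSum_succ, s_two_mul,
      s_two_mul_add_one]
    ring

section Norm

variable {R : Type*} [SeminormedCommRing R] [NormOneClass R]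

theorem norm_thueMorseSum_le {z : R} (hz : ‖z‖ ≤ 1) (N : ℕ) :
    ‖thueMorseSum z N‖ ≤ ‖1 - z‖ * ‖thueMorseSum (z ^ 2) (N / 2)‖ + 1 := by
  have hterm (n k : ℕ) : ‖(-1) ^ k * z ^ n‖ ≤ 1 := by
    rcases neg_one_pow_eq_or R k with h | h <;>
      simpa [h] using (norm_pow_le z n).trans (pow_le_one₀ (norm_nonneg z) hz)
  have heven (k : ℕ) : ‖thueMorseSum z (2 * k)‖ ≤ ‖1 - z‖ * ‖thueMorseSum (z ^ 2) k‖ := by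
    rw [thueMorseSum_two_mul]
    exact norm_mul_le _ _
  rcases Nat.even_or_odd' N with ⟨k, rfl | rfl⟩
  · rw [Nat.mul_div_cancel_left k two_pos]
    exact (heven k).trans (le_add_of_nonneg_right zero_le_one)
  · rw [show (2 * k + 1) / 2 = k by omega, thueMorseSum_succ]
    exact (norm_add_le _ _).trans (add_le_add (heven k) (hterm _ _))

theorem norm_thueMorseSum_one_le (N : ℕ) : ‖thueMorseSum (1 : R) N‖ ≤ 1 := by
  simpa using norm_thueMorseSum_le (R := R) (z := 1) norm_one.le N

theorem norm_thueMorseSum_le_mul_geom_sum {A : Set R} (hA : ∀ z ∈ A, ‖z‖ ≤ 1)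
    (hsq : ∀ z ∈ A, z ^ 2 ∈ A) {w : R → ℝ} {β : ℝ} (hβ : 0 ≤ β) (hw : ∀ z ∈ A, 1 ≤ w z)
    (hstep : ∀ z ∈ A, ‖1 - z‖ * w (z ^ 2) ≤ β * w z) {L N : ℕ} (hN : N < 2 ^ L) {z : R}
    (hz : z ∈ A) : ‖thueMorseSum z N‖ ≤ w z * ∑ i ∈ range L, β ^ i := by
  induction L generalizing N z with
  | zero =>
    obtain rfl : N = 0 := by simpa using hN
    simp [thueMorseSum]
  | succ L ih =>
    have hhalf := ih (show N / 2 < 2 ^ L by rw [pow_succ] at hN; omega) (hsq z hz)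
    have hgeom : 0 ≤ ∑ i ∈ range L, β ^ i := sum_nonneg fun i _ => pow_nonneg hβ i
    calc ‖thueMorseSum z N‖
        ≤ ‖1 - z‖ * ‖thueMorseSum (z ^ 2) (N / 2)‖ + 1 := norm_thueMorseSum_le (hA z hz) N
      _ ≤ ‖1 - z‖ * (w (z ^ 2) * ∑ i ∈ range L, β ^ i) + w z := by
          gcongr
          exact hw z hz
      _ = ‖1 - z‖ * w (z ^ 2) * ∑ i ∈ range L, β ^ i + w z := by ring
      _ ≤ β * w z * ∑ i ∈ range L, β ^ i + w z :=
          add_le_add_left (mul_le_mul_of_nonneg_right (hstep z hz) hgeom) _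
      _ = w z * ∑ i ∈ range (L + 1), β ^ i := by rw [geom_sum_succ]; ring

theorem thueMorseSum_isBigO_pow_log {A : Set R} (hA : ∀ z ∈ A, ‖z‖ ≤ 1)
    (hsq : ∀ z ∈ A, z ^ 2 ∈ A) {w : R → ℝ} {β : ℝ} (hβ : 1 < β) (hw : ∀ z ∈ A, 1 ≤ w z)
    (hstep : ∀ z ∈ A, ‖1 - z‖ * w (z ^ 2) ≤ β * w z) {z : R} (hz : z ∈ A) :
    thueMorseSum z =O[atTop] fun N : ℕ => β ^ Nat.log 2 N := by
  refine IsBigO.of_bound (w z * β / (β - 1)) (.of_forall fun N => ?_)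
  have hwz := hw z hz
  have : 0 < β - 1 := sub_pos.2 hβ
  calc ‖thueMorseSum z N‖ ≤ w z * ∑ i ∈ range (Nat.log 2 N + 1), β ^ i :=
        norm_thueMorseSum_le_mul_geom_sum hA hsq (by linarith) hw hstep
          (Nat.lt_pow_succ_log_self one_lt_two N) hz
    _ = w z * ((β ^ (Nat.log 2 N + 1) - 1) / (β - 1)) := by rw [geom_sum_eq hβ.ne']
    _ ≤ w z * (β ^ (Nat.log 2 N + 1) / (β - 1)) := by
        gcongr
        linarith
    _ = w z * β / (β - 1) * ‖β ^ Nat.log 2 N‖ := by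
        rw [Real.norm_of_nonneg (by positivity)]
        ring

end Norm

theorem sq_add_self_add_one_eq_of_norm_eq_one {z : ℂ} (hz : ‖z‖ = 1) :
    z ^ 2 + z + 1 = (3 - ‖1 - z‖ ^ 2 : ℝ) * z := by
  have hconj : z * (starRingEnd ℂ) z = 1 := by simp [Complex.mul_conj', hz]
  have hnorm : ((‖1 - z‖ ^ 2 : ℝ) : ℂ) = (1 - z) * (1 - (starRingEnd ℂ) z) := by
    rw [Complex.ofReal_pow, ← Complex.mul_conj', map_sub, map_one]
  rw [Complex.ofReal_sub, hnorm]
  push_cast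
  linear_combination (z - 1) * hconj

theorem norm_one_sub_sq_mul_norm_one_sub_sq_lt {z : ℂ} (hz : ‖z‖ = 1) (hω : z ^ 2 + z + 1 ≠ 0) :
    ‖1 - z‖ ^ 2 * ‖1 - z ^ 2‖ < √3 ^ 3 := by
  set a := ‖1 - z‖ ^ 2 with ha
  have ha_ne : a ≠ 3 := by
    intro h
    rw [sq_add_self_add_one_eq_of_norm_eq_one hz, ← ha, h] at hω
    simp at hω
  have hadd : ‖1 + z‖ ^ 2 = 4 - a := by
    have := parallelogram_law_with_norm ℝ 1 z
    rw [hz, norm_one] at this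
    linarith
  have hsqrt : (√3 ^ 3) ^ 2 = 27 := by
    rw [pow_right_comm, Real.sq_sqrt (by norm_num)]
    norm_num
  have hfactor : 0 < (a - 3) ^ 2 * (a ^ 2 + 2 * a + 3) := by
    have := sub_ne_zero.2 ha_ne
    positivity
  refine lt_of_pow_lt_pow_left₀ 2 (by positivity) ?_
  calc (a * ‖1 - z ^ 2‖) ^ 2 = a ^ 3 * ‖1 + z‖ ^ 2 := by
        rw [show 1 - z ^ 2 = (1 - z) * (1 + z) by ring, norm_mul, ha]
        ring
    _ = 27 - (a - 3) ^ 2 * (a ^ 2 + 2 * a + 3) := by rw [hadd]; ring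
    _ < (√3 ^ 3) ^ 2 := by rw [hsqrt]; linarith

theorem exists_lt_sqrt_three_forall_norm_one_sub_mul_le {A : Set ℂ} (hA : IsCompact A)
    (hnorm : ∀ z ∈ A, ‖z‖ = 1) (hω : ∀ z ∈ A, z ^ 2 + z + 1 ≠ 0) :
    ∃ β : ℝ, 1 < β ∧ β < √3 ∧ ∀ z ∈ A, ‖1 - z‖ ^ 2 * ‖1 - z ^ 2‖ ≤ β ^ 3 := by
  obtain ⟨a, ha, hle⟩ : ∃ a < √3 ^ 3, ∀ z ∈ A, ‖1 - z‖ ^ 2 * ‖1 - z ^ 2‖ ≤ a :=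
    hA.exists_forall_le' (α := ℝᵒᵈ) (f := fun z : ℂ => ‖1 - z‖ ^ 2 * ‖1 - z ^ 2‖) (by fun_prop)
      fun z hz => norm_one_sub_sq_mul_norm_one_sub_sq_lt (hnorm z hz) (hω z hz)
  have hnear : ∀ᶠ β : ℝ in 𝓝[<] √3, 1 < β ∧ a < β ^ 3 :=
    ((eventually_gt_nhds (Real.lt_sqrt_of_sq_lt (by norm_num))).and
      ((continuous_pow 3).continuousAt.eventually_const_lt ha)).filter_mono nhdsWithin_le_nhds
  obtain ⟨β, ⟨hβ1, haβ⟩, hβ3⟩ := (hnear.and self_mem_nhdsWithin).exists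
  exact ⟨β, hβ1, hβ3, fun z hz => (hle z hz).trans haβ.le⟩

theorem exists_pos_le_norm_one_sub_rpow {A : Set ℂ} (hA : IsCompact A) (h1 : 1 ∉ A) (p : ℝ) :
    ∃ δ : ℝ, 0 < δ ∧ ∀ z ∈ A, δ ≤ ‖1 - z‖ ^ p := by
  have hne {z : ℂ} (hz : z ∈ A) : ‖1 - z‖ ≠ 0 :=
    norm_ne_zero_iff.2 (sub_ne_zero.2 fun h => h1 (h ▸ hz))
  exact hA.exists_forall_le'
    (ContinuousOn.rpow_const (by fun_prop) fun z hz => Or.inl (hne hz))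
    fun z hz => Real.rpow_pos_of_pos ((norm_nonneg _).lt_of_ne' (hne hz)) p

theorem exists_weight_of_isCompact {A : Set ℂ} (hA : IsCompact A) (hnorm : ∀ z ∈ A, ‖z‖ = 1)
    (h1 : 1 ∉ A) (hω : ∀ z ∈ A, z ^ 2 + z + 1 ≠ 0) :
    ∃ (β : ℝ) (w : ℂ → ℝ), 1 < β ∧ β < √3 ∧ (∀ z ∈ A, 1 ≤ w z) ∧
      ∀ z ∈ A, ‖1 - z‖ * w (z ^ 2) ≤ β * w z := by
  obtain ⟨β, hβ1, hβ3, hβ⟩ := exists_lt_sqrt_three_forall_norm_one_sub_mul_le hA hnorm hω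
  obtain ⟨δ, hδ0, hδ⟩ := exists_pos_le_norm_one_sub_rpow hA h1 (1 / 3)
  -- `‖1 - z‖ * w (z ^ 2) / w z = (‖1 - z‖ ^ 2 * ‖1 - z ^ 2‖) ^ (1 / 3)` for this weight.
  set w : ℂ → ℝ := fun z => δ⁻¹ * ‖1 - z‖ ^ (1 / 3 : ℝ)
  have hw (z : ℂ) (hz : z ∈ A) : 1 ≤ w z := by
    simpa [w, hδ0.ne'] using mul_le_mul_of_nonneg_left (hδ z hz) (inv_nonneg.2 hδ0.le)
  have hw_cube (z : ℂ) : w z ^ 3 = δ⁻¹ ^ 3 * ‖1 - z‖ := by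
    rw [mul_pow, ← Real.rpow_natCast (‖1 - z‖ ^ _), ← Real.rpow_mul (norm_nonneg _)]
    norm_num
  refine ⟨β, w, hβ1, hβ3, hw, fun z hz => ?_⟩
  have hwz := hw z hz
  refine le_of_pow_le_pow_left₀ three_ne_zero (by positivity) ?_
  calc (‖1 - z‖ * w (z ^ 2)) ^ 3
      = δ⁻¹ ^ 3 * ‖1 - z‖ * (‖1 - z‖ ^ 2 * ‖1 - z ^ 2‖) := by rw [mul_pow, hw_cube]; ring
    _ ≤ δ⁻¹ ^ 3 * ‖1 - z‖ * β ^ 3 := by gcongr; exact hβ z hz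
    _ = (β * w z) ^ 3 := by rw [mul_pow, hw_cube]; ring

theorem tendsto_natLog_atTop {b : ℕ} (hb : 1 < b) : Tendsto (Nat.log b) atTop atTop :=
  tendsto_atTop.2 fun k => (eventually_ge_atTop (b ^ k)).mono fun _ => Nat.le_log_of_pow_le hb

theorem thueMorseSum_isLittleO_of_isCompact {A : Set ℂ} (hA : IsCompact A)
    (hnorm : ∀ z ∈ A, ‖z‖ = 1) (hsq : ∀ z ∈ A, z ^ 2 ∈ A) (h1 : 1 ∉ A)
    (hω : ∀ z ∈ A, z ^ 2 + z + 1 ≠ 0) {z : ℂ} (hz : z ∈ A) :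
    thueMorseSum z =o[atTop] fun N : ℕ => √3 ^ Nat.log 2 N := by
  obtain ⟨β, w, hβ1, hβ3, hw, hstep⟩ := exists_weight_of_isCompact hA hnorm h1 hω
  have hO := thueMorseSum_isBigO_pow_log (fun y hy => (hnorm y hy).le) hsq hβ1 hw hstep hz
  exact hO.trans_isLittleO <|
    (isLittleO_pow_pow_of_lt_left (by linarith) hβ3).comp_tendsto (tendsto_natLog_atTop one_lt_two)

theorem thueMorseSum_one_isLittleO :
    thueMorseSum (1 : ℂ) =o[atTop] fun N : ℕ => √3 ^ Nat.log 2 N := by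
  have hO : thueMorseSum (1 : ℂ) =O[atTop] fun N : ℕ => (1 : ℝ) ^ Nat.log 2 N :=
    IsBigO.of_norm_le fun N => by simpa using norm_thueMorseSum_one_le N
  exact hO.trans_isLittleO <| (isLittleO_pow_pow_of_lt_left zero_le_one
    (Real.lt_sqrt_of_sq_lt (by norm_num))).comp_tendsto (tendsto_natLog_atTop one_lt_two)

theorem thueMorseSum_isLittleO_of_odd_orderOf {z : ℂ} (hodd : Odd (orderOf z))
    (h3 : orderOf z ≠ 3) : thueMorseSum z =o[atTop] fun N : ℕ => √3 ^ Nat.log 2 N := by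
  rcases eq_or_ne z 1 with rfl | hz1
  · exact thueMorseSum_one_isLittleO
  set A : Set ℂ := ↑(primitiveRoots (orderOf z) ℂ)
  have hA {y : ℂ} : y ∈ A ↔ orderOf y = orderOf z := by
    rw [mem_coe, mem_primitiveRoots hodd.pos, IsPrimitiveRoot.iff_orderOf]
  have hnorm (y : ℂ) (hy : y ∈ A) : ‖y‖ = 1 :=
    Complex.norm_eq_one_of_pow_eq_one (hA.1 hy ▸ pow_orderOf_eq_one y) hodd.pos.ne'
  have hsq (y : ℂ) (hy : y ∈ A) : y ^ 2 ∈ A := by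
    have hcop : (orderOf y).Coprime 2 := by
      rw [hA.1 hy]
      exact hodd.coprime_two_right
    rw [hA, hcop.orderOf_pow, hA.1 hy]
  have h1 : 1 ∉ A := fun h => hz1 (orderOf_eq_one_iff.1 (by rw [← hA.1 h, orderOf_one]))
  have hω (y : ℂ) (hy : y ∈ A) (hy3 : y ^ 2 + y + 1 = 0) : False := by
    refine h3 ((hA.1 hy).symm.trans (orderOf_eq_prime (by linear_combination (y - 1) * hy3) ?_))
    rintro rfl
    exact h1 hy
  exact thueMorseSum_isLittleO_of_isCompact (finite_toSet _).isCompact hnorm hsq h1 hω (hA.2 rfl)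

theorem S_add_one (m N : ℕ) : S m (N + 1) = S m N + if m ∣ N then (-1) ^ s N else 0 :=
  sum_range_succ _ _

theorem abs_S_one_le (N : ℕ) : |S 1 N| ≤ 1 := by
  simpa [S, thueMorseSum] using norm_thueMorseSum_one_le (R := ℝ) N

theorem abs_S_add_sub_S_le_one {m r : ℕ} (hr : r ≤ m) (N : ℕ) : |S m (N + r) - S m N| ≤ 1 := by
  have hcard : #{n ∈ Ico N (N + r) | m ∣ n} ≤ 1 := by
    refine card_le_one.2 fun a ha b hb => ?_
    simp only [mem_filter, mem_Ico] at ha hb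
    refine Nat.ModEq.eq_of_abs_lt
      (((Nat.modEq_zero_iff_dvd.2 ha.2).trans (Nat.modEq_zero_iff_dvd.2 hb.2).symm)) ?_
    rw [abs_lt]
    omega
  calc |S m (N + r) - S m N| = |∑ n ∈ Ico N (N + r) with m ∣ n, (-1 : ℝ) ^ s n| := by
        rw [S, S, ← sum_Ico_eq_sub _ (Nat.le_add_right N r), sum_filter]
    _ ≤ ∑ n ∈ Ico N (N + r) with m ∣ n, |(-1 : ℝ) ^ s n| := abs_sum_le_sum_abs _ _
    _ ≤ 1 := by simpa using hcard

theorem S_three_four_mul (N : ℕ) : S 3 (4 * N) = 3 * S 3 N - S 1 N := by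
  induction N with
  | zero => simp [S]
  | succ N ih =>
    have hs0 : s (4 * N) = s N := by
      rw [show 4 * N = 2 * (2 * N) by ring, s_two_mul, s_two_mul]
    have hs1 : s (4 * N + 1) = s N + 1 := by
      rw [show 4 * N + 1 = 2 * (2 * N) + 1 by ring, s_two_mul_add_one, s_two_mul]
    have hs2 : s (4 * N + 2) = s N + 1 := by
      rw [show 4 * N + 2 = 2 * (2 * N + 1) by ring, s_two_mul, s_two_mul_add_one]
    have hs3 : s (4 * N + 3) = s N + 2 := by
      rw [show 4 * N + 3 = 2 * (2 * N + 1) + 1 by ring, s_two_mul_add_one, s_two_mul_add_one]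
    rw [show 4 * (N + 1) = 4 * N + 3 + 1 by ring]
    simp only [S_add_one, ih, hs0, hs1, hs2, hs3, one_dvd, if_true]
    split_ifs <;> first | (exfalso; lia) | ring

theorem three_mul_S_three_div_four_le (N : ℕ) : 3 * S 3 (N / 4) - 2 ≤ S 3 N := by
  have hrem := (abs_le.1 (abs_S_add_sub_S_le_one (m := 3) (r := N % 4) (by omega)
    (4 * (N / 4)))).1
  have hone := (abs_le.1 (abs_S_one_le (N / 4))).2
  rw [Nat.div_add_mod, S_three_four_mul] at hrem
  linarith

theorem sqrt_three_pow_log_le {N : ℕ} (hN : 4 ≤ N) : √3 ^ Nat.log 2 N ≤ 9 * (S 3 N - 1) := by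
  induction N using Nat.strong_induction_on with
  | _ N ih =>
    have hsq : √3 ^ 2 = 3 := Real.sq_sqrt (by norm_num)
    rcases lt_or_ge N 16 with hlt | hge
    · have hS : 2 ≤ S 3 N := by
        interval_cases N <;> norm_num [S, sum_range_succ, s]
      calc √3 ^ Nat.log 2 N ≤ √3 ^ 4 :=
            pow_le_pow_right₀ (Real.one_le_sqrt.2 (by norm_num))
              (Nat.log_lt_of_lt_pow (by omega) hlt).le
        _ = 9 := by rw [pow_mul _ 2 2, hsq]; norm_num
        _ ≤ 9 * (S 3 N - 1) := by linarith
    · have hlog : Nat.log 2 N = Nat.log 2 (N / 4) + 2 := by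
        have := Nat.le_log_of_pow_le one_lt_two (show 2 ^ 4 ≤ N from hge)
        rw [show N / 4 = N / 2 / 2 by omega, Nat.log_div_base, Nat.log_div_base]
        omega
      have hquarter := ih (N / 4) (by omega) (by omega)
      have hrec := three_mul_S_three_div_four_le N
      rw [hlog, pow_add, hsq]
      linarith

theorem eventually_S_three_pos : ∀ᶠ N in atTop, 0 < S 3 N := by
  filter_upwards [eventually_ge_atTop 4] with N hN
  have := sqrt_three_pow_log_le hN
  have : 0 < √3 ^ Nat.log 2 N := by positivity
  linarith

theorem sqrt_three_pow_log_isBigO_S_three :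
    (fun N : ℕ => √3 ^ Nat.log 2 N) =O[atTop] S 3 := by
  refine IsBigO.of_bound 9 ?_
  filter_upwards [eventually_ge_atTop 4, eventually_S_three_pos] with N hN hpos
  rw [Real.norm_of_nonneg (by positivity), Real.norm_of_nonneg hpos.le]
  linarith [sqrt_three_pow_log_le hN]

theorem thueMorseSum_isLittleO_S_three {z : ℂ} (hodd : Odd (orderOf z)) (h3 : orderOf z ≠ 3) :
    thueMorseSum z =o[atTop] S 3 :=
  (thueMorseSum_isLittleO_of_odd_orderOf hodd h3).trans_isBigO sqrt_three_pow_log_isBigO_S_three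

theorem sum_nthRootsFinset_pow {R : Type*} [CommRing R] [IsDomain R] {M : ℕ} (hM : 0 < M) {ζ : R}
    (hζ : IsPrimitiveRoot ζ M) (n : ℕ) :
    ∑ z ∈ nthRootsFinset M (1 : R), z ^ n = if M ∣ n then (M : R) else 0 := by
  split_ifs with h
  · obtain ⟨k, rfl⟩ := h
    have hone (z : R) (hz : z ∈ nthRootsFinset M (1 : R)) : z ^ (M * k) = 1 := by
      rw [pow_mul, (mem_nthRootsFinset hM 1).1 hz, one_pow]
    simp [sum_congr rfl hone, hζ.card_nthRootsFinset]
  · have hmaps (z : R) (hz : z ∈ nthRootsFinset M (1 : R)) : ζ * z ∈ nthRootsFinset M (1 : R) := by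
      simpa using mul_mem_nthRootsFinset (hζ.mem_nthRootsFinset hM) hz
    have hinj : Set.InjOn (ζ * ·) (nthRootsFinset M (1 : R) : Set R) :=
      (mul_right_injective₀ (hζ.ne_zero hM.ne')).injOn
    have hrotate : ζ ^ n * ∑ z ∈ nthRootsFinset M (1 : R), z ^ n =
        ∑ z ∈ nthRootsFinset M (1 : R), z ^ n := by
      rw [mul_sum]
      exact sum_nbij (ζ * ·) hmaps hinj (surjOn_of_injOn_of_card_le _ hmaps hinj le_rfl)
        fun z _ => (mul_pow ζ z n).symm
    have hne : ζ ^ n - 1 ≠ 0 := sub_ne_zero.2 fun h' => h ((hζ.pow_eq_one_iff_dvd n).1 h')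
    exact (mul_eq_zero.1 (by rw [sub_one_mul, hrotate, sub_self])).resolve_left hne

theorem sum_nthRootsFinset_thueMorseSum {M : ℕ} (hM : 0 < M) (N : ℕ) :
    ∑ z ∈ nthRootsFinset M (1 : ℂ), thueMorseSum z N = (M * S M N : ℝ) := by
  simp only [thueMorseSum]
  rw [sum_comm, S, mul_sum, Complex.ofReal_sum]
  refine sum_congr rfl fun n _ => ?_
  rw [← mul_sum, sum_nthRootsFinset_pow hM (Complex.isPrimitiveRoot_exp M hM.ne')]
  split_ifs <;> simp [mul_comm]

theorem S_isLittleO_S_three {M : ℕ} (hM : Odd M) (h3 : ¬ 3 ∣ M) : S M =o[atTop] S 3 := by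
  have hsum : (fun N => ((M * S M N : ℝ) : ℂ)) =o[atTop] S 3 := by
    simp only [← sum_nthRootsFinset_thueMorseSum hM.pos]
    refine IsLittleO.fun_sum fun z hz => ?_
    have hdvd : orderOf z ∣ M := orderOf_dvd_of_pow_eq_one ((mem_nthRootsFinset hM.pos 1).1 hz)
    exact thueMorseSum_isLittleO_S_three (hM.of_dvd_nat hdvd) fun h => h3 (h ▸ hdvd)
  exact (isLittleO_const_mul_left_iff (Nat.cast_ne_zero.2 hM.pos.ne')).1
    (Complex.isLittleO_ofReal_left.1 hsum)

theorem mul_S_sub_three_mul_S_three_isLittleO {M : ℕ} (hM : Odd M) (h3 : 3 ∣ M) :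
    (fun N => M * S M N - 3 * S 3 N) =o[atTop] S 3 := by
  have hsub : nthRootsFinset 3 (1 : ℂ) ⊆ nthRootsFinset M 1 := by
    intro z hz
    rw [mem_nthRootsFinset three_pos] at hz
    rw [mem_nthRootsFinset hM.pos]
    exact orderOf_dvd_iff_pow_eq_one.1 ((orderOf_dvd_of_pow_eq_one hz).trans h3)
  have hsplit (N : ℕ) : ((M * S M N - 3 * S 3 N : ℝ) : ℂ) =
      ∑ z ∈ nthRootsFinset M 1 \ nthRootsFinset 3 1, thueMorseSum z N := by
    rw [sum_sdiff_eq_sub hsub, sum_nthRootsFinset_thueMorseSum hM.pos,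
      sum_nthRootsFinset_thueMorseSum three_pos]
    push_cast
    ring
  refine Complex.isLittleO_ofReal_left.1 ?_
  simp only [hsplit]
  refine IsLittleO.fun_sum fun z hz => ?_
  rw [Finset.mem_sdiff, mem_nthRootsFinset hM.pos, mem_nthRootsFinset three_pos] at hz
  exact thueMorseSum_isLittleO_S_three (hM.of_dvd_nat (orderOf_dvd_of_pow_eq_one hz.1))
    fun h => hz.2 (h ▸ pow_orderOf_eq_one z)

theorem eventually_S_lt_S_three_mul {m : ℕ} (hodd : Odd m) (h3 : ¬ 3 ∣ m) :
    ∀ᶠ N in atTop, S m N < S (3 * m) N := by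
  have hmain : (fun N => 3 * m * (S m N - S (3 * m) N) + 3 * S 3 N) =o[atTop] S 3 := by
    refine (((S_isLittleO_S_three hodd h3).const_mul_left (3 * m)).sub
      (mul_S_sub_three_mul_S_three_isLittleO (Odd.mul (by decide) hodd) ⟨m, rfl⟩)).congr_left
      fun N => ?_
    push_cast
    ring
  filter_upwards [hmain.def one_pos, eventually_S_three_pos] with N hle hpos
  rw [one_mul, Real.norm_of_nonneg hpos.le] at hle
  have hneg : 3 * m * (S m N - S (3 * m) N) < 0 := by linarith [(abs_le.1 hle).2]
  exact sub_neg.1 (neg_of_mul_neg_right hneg (by positivity))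

theorem sum_U_eq_S_sub_S {m : ℕ} (hm : Nat.Coprime m 3) (x : ℕ) :
    ∑ n ∈ U m x, (-1 : ℝ) ^ s n = S m (x + 1) - S (3 * m) (x + 1) := by
  have hU : U m x = {n ∈ range (x + 1) | m ∣ n ∧ ¬ 3 ∣ n} := by
    ext n
    simp only [U, mem_filter, mem_Icc, mem_range]
    omega
  rw [hU, sum_filter, S, S, ← sum_sub_distrib]
  refine sum_congr rfl fun n _ => ?_
  have hdvd : 3 * m ∣ n ↔ 3 ∣ n ∧ m ∣ n :=
    ⟨fun h => ⟨dvd_of_mul_right_dvd h, dvd_of_mul_left_dvd h⟩,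
      fun h => hm.symm.mul_dvd_of_dvd_of_dvd h.1 h.2⟩
  by_cases h3 : 3 ∣ n <;> simp [hdvd, h3]

theorem U_two_mul (m x : ℕ) : U (2 * m) x = (U m (x / 2)).image (2 * ·) := by
  ext n
  simp only [U, mem_image, mem_filter, mem_Icc]
  constructor
  · rintro ⟨⟨hpos, hle⟩, hdvd, h3⟩
    obtain ⟨q, rfl⟩ := dvd_of_mul_right_dvd hdvd
    exact ⟨q, ⟨by omega, Nat.dvd_of_mul_dvd_mul_left two_pos hdvd, by omega⟩, rfl⟩
  · rintro ⟨q, ⟨⟨hpos, hle⟩, hdvd, h3⟩, rfl⟩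
    exact ⟨by omega, Nat.mul_dvd_mul_left 2 hdvd, by omega⟩

theorem sum_U_two_mul (m x : ℕ) :
    ∑ n ∈ U (2 * m) x, (-1 : ℝ) ^ s n = ∑ n ∈ U m (x / 2), (-1 : ℝ) ^ s n := by
  rw [U_two_mul, sum_image fun a _ b _ h => Nat.eq_of_mul_eq_mul_left two_pos h]
  simp only [s_two_mul]

theorem eventually_sum_U_neg {m : ℕ} (hm : Nat.Coprime m 3) :
    ∀ᶠ x in atTop, ∑ n ∈ U m x, (-1 : ℝ) ^ s n < 0 := by
  induction m using Nat.strong_induction_on with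
  | _ m ih =>
    rcases Nat.even_or_odd' m with ⟨q, rfl | rfl⟩
    · have hq : q ≠ 0 := by
        rintro rfl
        norm_num at hm
      simp only [sum_U_two_mul]
      exact (Nat.tendsto_div_const_atTop two_ne_zero).eventually
        (ih q (by omega) (Nat.Coprime.coprime_mul_left hm))
    · have hlt := eventually_S_lt_S_three_mul (odd_two_mul_add_one q)
        ((Nat.Prime.coprime_iff_not_dvd Nat.prime_three).1 hm.symm)
      filter_upwards [(tendsto_add_atTop_nat 1).eventually hlt] with x hx
      rw [sum_U_eq_S_sub_S hm]
      exact sub_neg.2 hx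

theorem stmt_13_general (m : ℕ) (hgcd : Nat.gcd m 3 = 1) :
    ∃ x₀ : ℕ, ∀ x : ℕ, x₀ ≤ x → (∑ n ∈ U m x, (-1 : ℝ) ^ (s n)) < 0 :=
  eventually_atTop.1 (eventually_sum_U_neg hgcd)

theorem stmt_13 (m : ℕ) (hm : 5 ≤ m) (hgcd : Nat.gcd m 3 = 1) :
    ∃ x₀ : ℕ, ∀ x : ℕ, x₀ ≤ x → (∑ n ∈ U m x, (-1 : ℝ) ^ (s n)) < 0 :=
  stmt_13_general m hgcd
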